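/- Let p be an odd prime, let d, e, f be positive integers with d ≤ e, f ≤ e and e ≤ d + f, and let G = M₁(p,d,e,f) with canonical generators a, b. For integers r, s, t, u, the assignment a ↦ bʳaˢ, b ↦ bᵗaᵘ extends to an automorphism of G if and only if one of the following holds: (i) f = e = d and ru − st ≢ 0 (mod p); (ii) f < e = d, r ≡ 0 (mod p^{e−f}), t ≡ 1 (mod p^{e−f}) and s ≢ 0 (mod p); (iii) d < f = e, u ≡ 0 (mod p^{e−d}) and st ≢ 0 (mod p); (iv) d ≤ f < e, u ≡ 0 (mod p^{e−d}), t ≡ 1 (mod p^{e−f}) and s ≢ 0 (mod p); (v) f < d < e, r ≡ 0 (mod p^{d−f}), u ≡ 0 (mod p^{e−d}), t ≡ 1 (mod p^{e−f}) and s ≢ 0 (mod p). -/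

import Mathlib

/-- Relators for the group `M₁(p,d,e,f) = ⟨a, b ∣ a^(p^e) = b^(p^d) = 1, b⁻¹ab = a^(1+p^f)⟩`,
where `a` is generator `0` and `b` is generator `1`. -/
def M1rels (p d e f : ℕ) : Set (FreeGroup (Fin 2)) :=
  {FreeGroup.of 0 ^ p ^ e, FreeGroup.of 1 ^ p ^ d,
    (FreeGroup.of 1)⁻¹ * FreeGroup.of 0 * FreeGroup.of 1 * (FreeGroup.of 0 ^ (1 + p ^ f))⁻¹}

/-- The metacyclic group `M₁(p,d,e,f) = ⟨a, b ∣ a^(p^e) = b^(p^d) = 1, b⁻¹ab = a^(1+p^f)⟩`. -/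
abbrev M1 (p d e f : ℕ) : Type := PresentedGroup (M1rels p d e f)

/-- The canonical generator `a` of `M₁(p,d,e,f)`. -/
def M1a (p d e f : ℕ) : M1 p d e f := PresentedGroup.of 0

/-- The canonical generator `b` of `M₁(p,d,e,f)`. -/
def M1b (p d e f : ℕ) : M1 p d e f := PresentedGroup.of 1

/-- Relators for the group `M₂(p,d,e,f) = ⟨a, b ∣ a^(p^d) = b^(p^e) = 1, b⁻¹ab = a^(1+p^f)⟩`,
where `a` is generator `0` and `b` is generator `1`. -/
def M2rels (p d e f : ℕ) : Set (FreeGroup (Fin 2)) :=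
  {FreeGroup.of 0 ^ p ^ d, FreeGroup.of 1 ^ p ^ e,
    (FreeGroup.of 1)⁻¹ * FreeGroup.of 0 * FreeGroup.of 1 * (FreeGroup.of 0 ^ (1 + p ^ f))⁻¹}

/-- The metacyclic group `M₂(p,d,e,f) = ⟨a, b ∣ a^(p^d) = b^(p^e) = 1, b⁻¹ab = a^(1+p^f)⟩`. -/
abbrev M2 (p d e f : ℕ) : Type := PresentedGroup (M2rels p d e f)

/-- The canonical generator `a` of `M₂(p,d,e,f)`. -/
def M2a (p d e f : ℕ) : M2 p d e f := PresentedGroup.of 0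

/-- The canonical generator `b` of `M₂(p,d,e,f)`. -/
def M2b (p d e f : ℕ) : M2 p d e f := PresentedGroup.of 1

/-- Relators for the group
`M₃(p,d,e,h,f) = ⟨a, b ∣ a^(p^h) = 1, b^(p^(d+e-h)) = a^(p^d), b⁻¹ab = a^(1+p^f)⟩`,
where `a` is generator `0` and `b` is generator `1`. -/
def M3rels (p d e h f : ℕ) : Set (FreeGroup (Fin 2)) :=
  {FreeGroup.of 0 ^ p ^ h, FreeGroup.of 1 ^ p ^ (d + e - h) * (FreeGroup.of 0 ^ p ^ d)⁻¹,
    (FreeGroup.of 1)⁻¹ * FreeGroup.of 0 * FreeGroup.of 1 * (FreeGroup.of 0 ^ (1 + p ^ f))⁻¹}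

/-- The non-split metacyclic group
`M₃(p,d,e,h,f) = ⟨a, b ∣ a^(p^h) = 1, b^(p^(d+e-h)) = a^(p^d), b⁻¹ab = a^(1+p^f)⟩`. -/
abbrev M3 (p d e h f : ℕ) : Type := PresentedGroup (M3rels p d e h f)

/-- The canonical generator `a` of `M₃(p,d,e,h,f)`. -/
def M3a (p d e h f : ℕ) : M3 p d e h f := PresentedGroup.of 0

/-- The canonical generator `b` of `M₃(p,d,e,h,f)`. -/
def M3b (p d e h f : ℕ) : M3 p d e h f := PresentedGroup.of 1

/-- `(α, β)` is an exact `(m,n)`-bicyclic pair of `G`: `α` has order `m`, `β` has order `n`,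
`⟨α⟩ ∩ ⟨β⟩ = 1`, and `G = ⟨α⟩⟨β⟩`. -/
def IsExactBicyclicPair {G : Type*} [Group G] (m n : ℕ) (α β : G) : Prop :=
  orderOf α = m ∧ orderOf β = n ∧
    Subgroup.zpowers α ⊓ Subgroup.zpowers β = ⊥ ∧
    ∀ g : G, ∃ i j : ℤ, g = α ^ i * β ^ j

theorem IsCoprime.dvd_mul_left_iff {R : Type*} [CommSemiring R] {k m n : R} (h : IsCoprime k m) :
    k ∣ m * n ↔ k ∣ n :=
  ⟨h.dvd_of_dvd_mul_left, fun hn => hn.mul_left m⟩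

/-! ### Arithmetic of `1 + p ^ f` and of geometric sums -/

theorem emultiplicity_one_add_pow_sub_one {p f : ℕ} (hp : p.Prime) (hodd : Odd p) (hf : 0 < f)
    (n : ℕ) :
    emultiplicity (p : ℤ) ((1 + (p : ℤ) ^ f) ^ n - 1) = emultiplicity (p : ℤ) ((p : ℤ) ^ f * n) := by
  have hpz : Prime (p : ℤ) := Nat.prime_iff_prime_int.mp hp
  have hdvd : (p : ℤ) ∣ (p : ℤ) ^ f := dvd_pow_self _ hf.ne'
  have h := Int.emultiplicity_pow_sub_pow hp hodd (x := 1 + (p : ℤ) ^ f) (y := 1)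
    (by simpa using hdvd)
    (fun h => hpz.not_dvd_one ((dvd_add_left hdvd).mp h)) n
  rwa [one_pow, add_sub_cancel_left, ← Int.natCast_emultiplicity p n,
    ← emultiplicity_mul hpz] at h

theorem pow_dvd_mul_one_add_pow_sub_one_iff {p f : ℕ} (hp : p.Prime) (hodd : Odd p) (hf : 0 < f)
    (m n : ℕ) (c : ℤ) :
    (p : ℤ) ^ m ∣ c * ((1 + (p : ℤ) ^ f) ^ n - 1) ↔ (p : ℤ) ^ m ∣ c * ((p : ℤ) ^ f * n) := by
  have hpz : Prime (p : ℤ) := Nat.prime_iff_prime_int.mp hp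
  rw [pow_dvd_iff_le_emultiplicity, pow_dvd_iff_le_emultiplicity, emultiplicity_mul hpz,
    emultiplicity_mul hpz, emultiplicity_one_add_pow_sub_one hp hodd hf]

theorem pow_dvd_one_add_pow_sub_one_iff {p f : ℕ} (hp : p.Prime) (hodd : Odd p) (hf : 0 < f)
    (m n : ℕ) :
    (p : ℤ) ^ m ∣ (1 + (p : ℤ) ^ f) ^ n - 1 ↔ (p : ℤ) ^ m ∣ (p : ℤ) ^ f * n := by
  simpa using pow_dvd_mul_one_add_pow_sub_one_iff hp hodd hf m n 1

theorem geom_sum_mul_index {R : Type*} [CommSemiring R] (Q : R) (m n : ℕ) :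
    ∑ i ∈ Finset.range (m * n), Q ^ i =
      (∑ i ∈ Finset.range m, Q ^ i) * ∑ i ∈ Finset.range n, (Q ^ m) ^ i := by
  induction n with
  | zero => simp
  | succ n ih =>
    rw [Nat.mul_succ, Finset.sum_range_add, ih, Finset.sum_range_succ, mul_add, ← pow_mul]
    simp only [pow_add, ← Finset.mul_sum]
    ring

theorem sub_one_dvd_geom_sum_sub (Q : ℤ) (n : ℕ) :
    Q - 1 ∣ ∑ i ∈ Finset.range n, Q ^ i - n := by
  have h : ∑ i ∈ Finset.range n, Q ^ i - n = ∑ i ∈ Finset.range n, (Q ^ i - 1) := by simp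
  rw [h]
  exact Finset.dvd_sum fun i _ => by simpa using sub_dvd_pow_sub_pow Q 1 i

theorem sq_sub_one_dvd_pow_sub (Q : ℤ) (n : ℕ) :
    (Q - 1) ^ 2 ∣ Q ^ n - 1 - n * (Q - 1) := by
  have h : Q ^ n - 1 - n * (Q - 1) = (Q - 1) * (∑ i ∈ Finset.range n, Q ^ i - n) := by
    rw [mul_sub (Q - 1), mul_geom_sum]; ring
  rw [h, sq]
  exact mul_dvd_mul_left _ (sub_one_dvd_geom_sum_sub Q n)

theorem pow_succ_dvd_geom_sum_prime_sub {p k : ℕ} (hodd : Odd p) (hk : 0 < k) {Q : ℤ}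
    (hQ : (p : ℤ) ^ k ∣ Q - 1) :
    (p : ℤ) ^ (k + 1) ∣ ∑ i ∈ Finset.range p, Q ^ i - p := by
  obtain ⟨m, hm⟩ := hodd
  have hsum : (∑ i ∈ Finset.range p, (i : ℤ)) = p * m := by
    have h := Finset.sum_range_id_mul_two p
    have h2 : p - 1 = m * 2 := by omega
    rw [h2, ← mul_assoc] at h
    rw [← Nat.cast_sum, Nat.eq_of_mul_eq_mul_right two_pos h, Nat.cast_mul]
  have h : ∑ i ∈ Finset.range p, Q ^ i - p =
      ∑ i ∈ Finset.range p, (Q ^ i - 1 - i * (Q - 1)) + (Q - 1) * p * m := by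
    rw [Finset.sum_sub_distrib, Finset.sum_sub_distrib, ← Finset.sum_mul, hsum]
    simp only [Finset.sum_const, Finset.card_range, nsmul_eq_mul, mul_one]
    ring
  rw [h]
  refine dvd_add (Finset.dvd_sum fun i _ => ?_) ?_
  · refine dvd_trans ?_ (sq_sub_one_dvd_pow_sub Q i)
    refine dvd_trans ?_ (pow_dvd_pow_of_dvd hQ 2)
    rw [← pow_mul]
    exact pow_dvd_pow _ (by omega)
  · rw [pow_succ]
    exact Dvd.dvd.mul_right (mul_dvd_mul_right hQ _) _

theorem pow_add_dvd_geom_sum_prime_pow_sub {p : ℕ} (hodd : Odd p) (n : ℕ) :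
    ∀ {k : ℕ} (_ : 0 < k) {Q : ℤ} (_ : (p : ℤ) ^ k ∣ Q - 1),
      (p : ℤ) ^ (n + k) ∣ ∑ i ∈ Finset.range (p ^ n), Q ^ i - (p : ℤ) ^ n := by
  induction n with
  | zero => intro k _ Q _; simp
  | succ n ih =>
    intro k hk Q hQ
    have h1 := pow_succ_dvd_geom_sum_prime_sub hodd hk hQ
    have hQp : (p : ℤ) ^ (k + 1) ∣ Q ^ p - 1 := by
      rw [← mul_geom_sum, pow_succ]
      refine mul_dvd_mul hQ ?_
      have := (dvd_trans (dvd_pow_self (p : ℤ) k.succ_ne_zero) h1)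
      simpa using dvd_add this (dvd_refl (p : ℤ))
    obtain ⟨c, hc⟩ := ih (Nat.add_pos_left hk 1) hQp
    obtain ⟨c', hc'⟩ := h1
    rw [pow_succ' p n, geom_sum_mul_index]
    refine ⟨c * ∑ i ∈ Finset.range p, Q ^ i + c', ?_⟩
    rw [sub_eq_iff_eq_add] at hc hc'
    rw [hc]
    linear_combination (p : ℤ) ^ n * hc'

theorem exists_geom_sum_prime_pow_eq {p : ℕ} (hodd : Odd p) {Q : ℤ}
    (hQ : (p : ℤ) ∣ Q - 1) (n : ℕ) :
    ∃ c : ℤ, IsCoprime (p : ℤ) c ∧ ∑ i ∈ Finset.range (p ^ n), Q ^ i = (p : ℤ) ^ n * c := by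
  obtain ⟨c, hc⟩ := pow_add_dvd_geom_sum_prime_pow_sub hodd n one_pos (by simpa using hQ)
  refine ⟨1 + p * c, ⟨-c, 1, by ring⟩, ?_⟩
  rw [sub_eq_iff_eq_add] at hc
  rw [hc]; ring

/-! ### Calculus in a group with `a * b = b * a ^ q` -/

section Calculus

variable {G : Type*} [Group G] {a b : G} {q : ℕ}

theorem pow_mul_pow_of_mul_eq (h : a * b = b * a ^ q) (j k : ℕ) :
    a ^ j * b ^ k = b ^ k * a ^ (j * q ^ k) := by
  have h1 (j : ℕ) : a ^ j * b = b * a ^ (j * q) := by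
    have : SemiconjBy b (a ^ q) a := h.symm
    simpa [← pow_mul, mul_comm q j] using (this.pow_right j).eq.symm
  induction k generalizing j with
  | zero => simp
  | succ k ih => rw [pow_succ, ← mul_assoc, ih, mul_assoc, h1, ← mul_assoc, mul_assoc j,
      ← pow_succ, ← pow_succ]

theorem normal_form_mul (h : a * b = b * a ^ q) (i j k l : ℕ) :
    b ^ i * a ^ j * (b ^ k * a ^ l) = b ^ (i + k) * a ^ (j * q ^ k + l) := by
  rw [mul_assoc, ← mul_assoc (a ^ j), pow_mul_pow_of_mul_eq h, pow_add, pow_add]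
  simp only [mul_assoc]

theorem normal_form_pow (h : a * b = b * a ^ q) (r s n : ℕ) :
    (b ^ r * a ^ s) ^ n = b ^ (r * n) * a ^ (s * ∑ i ∈ Finset.range n, (q ^ r) ^ i) := by
  induction n with
  | zero => simp
  | succ n ih =>
    rw [pow_succ, ih, normal_form_mul h, geom_sum_succ]
    congr 2
    ring

end Calculus

theorem Subgroup.mem_of_pow_mem_of_coprime {G : Type*} [Group G] (H : Subgroup G) {g : G} {N : ℕ}
    (hg : g ^ N = 1) {m : ℤ} (hm : g ^ m ∈ H) (hc : IsCoprime (N : ℤ) m) : g ∈ H := by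
  obtain ⟨x, y, hxy⟩ := hc
  have : g = (g ^ m) ^ y := by
    rw [← zpow_mul]
    calc g = g ^ (x * N + y * m) := by rw [hxy, zpow_one]
      _ = _ := by
        rw [zpow_add, mul_comm x, zpow_mul, zpow_natCast, hg, one_zpow, one_mul, mul_comm]
  rw [this]
  exact H.zpow_mem hm y

/-! ### Normal forms in `M₁(p,d,e,f)` -/

section M1

variable {p d e f : ℕ}

theorem M1a_pow : M1a p d e f ^ p ^ e = 1 :=
  PresentedGroup.one_of_mem (rels := M1rels p d e f) (x := FreeGroup.of 0 ^ p ^ e) (by simp [M1rels])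

theorem M1b_pow : M1b p d e f ^ p ^ d = 1 :=
  PresentedGroup.one_of_mem (rels := M1rels p d e f) (x := FreeGroup.of 1 ^ p ^ d) (by simp [M1rels])

theorem M1_mul : M1a p d e f * M1b p d e f = M1b p d e f * M1a p d e f ^ (1 + p ^ f) := by
  have h : (M1b p d e f)⁻¹ * M1a p d e f * M1b p d e f * (M1a p d e f ^ (1 + p ^ f))⁻¹ = 1 :=
    PresentedGroup.one_of_mem (rels := M1rels p d e f)
      (x := (FreeGroup.of 1)⁻¹ * FreeGroup.of 0 * FreeGroup.of 1 *
        (FreeGroup.of 0 ^ (1 + p ^ f))⁻¹) (by simp [M1rels])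
  rw [mul_inv_eq_one, mul_assoc, inv_mul_eq_iff_eq_mul] at h
  exact h

theorem M1_exists_hom {G : Type*} [Group G] {x y : G} (hx : x ^ p ^ e = 1) (hy : y ^ p ^ d = 1)
    (hxy : x * y = y * x ^ (1 + p ^ f)) :
    ∃ φ : M1 p d e f →* G, φ (M1a p d e f) = x ∧ φ (M1b p d e f) = y := by
  have h : ∀ g ∈ M1rels p d e f, FreeGroup.lift ![x, y] g = 1 := by
    rintro g (rfl | rfl | rfl)
    · simpa using hx
    · simpa using hy
    · simpa [mul_assoc, inv_mul_eq_iff_eq_mul, ← mul_inv_eq_iff_eq_mul] using hxy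
  exact ⟨PresentedGroup.toGroup h, PresentedGroup.toGroup.of h, PresentedGroup.toGroup.of h⟩

theorem M1_hom_ext {G : Type*} [Group G] {φ ψ : M1 p d e f →* G}
    (ha : φ (M1a p d e f) = ψ (M1a p d e f)) (hb : φ (M1b p d e f) = ψ (M1b p d e f)) : φ = ψ :=
  PresentedGroup.ext fun i => by fin_cases i <;> assumption

theorem M1_eq_top_of_generators_mem {H : Subgroup (M1 p d e f)} (ha : M1a p d e f ∈ H)
    (hb : M1b p d e f ∈ H) : H = ⊤ := by
  rw [eq_top_iff, ← PresentedGroup.closure_range_of, Subgroup.closure_le]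
  rintro _ ⟨i, rfl⟩
  fin_cases i <;> assumption

theorem prime_pow_dvd_of_M1a_pow_eq_one (hp : p.Prime) (hodd : Odd p) (hf : 0 < f)
    (hedf : e ≤ d + f) {j : ℕ} (h : M1a p d e f ^ j = 1) : p ^ e ∣ j := by
  have hq : ((1 + p ^ f : ℕ) : ZMod (p ^ e)) ^ p ^ d = 1 := by
    have h1 := (pow_dvd_one_add_pow_sub_one_iff hp hodd hf e (p ^ d)).mpr
      ⟨(p : ℤ) ^ (d + f - e), by push_cast; rw [← pow_add, ← pow_add]; congr 1; omega⟩
    have h2 := (ZMod.intCast_zmod_eq_zero_iff_dvd ((1 + (p : ℤ) ^ f) ^ p ^ d - 1) (p ^ e)).mpr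
      (by exact_mod_cast h1)
    push_cast at h2 ⊢
    exact sub_eq_zero.mp h2
  let Q : (ZMod (p ^ e))ˣ := Units.ofPowEqOne _ (p ^ d) hq (pow_pos hp.pos d).ne'
  have hQ : Q ^ p ^ d = 1 := Units.pow_ofPowEqOne _ _
  let x : Equiv.Perm (ZMod (p ^ e)) := Equiv.addRight 1
  let y : Equiv.Perm (ZMod (p ^ e)) := MulAction.toPermHom _ _ Q⁻¹
  have hpow (n : ℕ) : x ^ n = Equiv.addRight (n : ZMod (p ^ e)) := by
    simp [x]
  obtain ⟨φ, ha, -⟩ := M1_exists_hom (p := p) (d := d) (e := e) (f := f) (x := x) (y := y)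
    (by rw [hpow]; ext z; simp)
    (by rw [← map_pow, inv_pow, hQ, inv_one, map_one])
    (by
      rw [hpow]
      ext z : 1
      have : ((Q⁻¹ : (ZMod (p ^ e))ˣ) : ZMod (p ^ e)) * ((1 + p ^ f : ℕ) : ZMod (p ^ e)) = 1 :=
        Q.inv_mul
      simp only [x, y, Equiv.Perm.mul_apply, Equiv.coe_addRight, MulAction.toPermHom_apply,
        MulAction.toPerm_apply, Units.smul_def, smul_eq_mul, mul_add, this])
  have h1 := congrArg φ h
  rw [map_pow, ha, map_one, hpow] at h1
  have h2 := congrArg (fun σ : Equiv.Perm (ZMod (p ^ e)) => σ 0) h1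
  simpa [ZMod.natCast_eq_zero_iff] using h2

theorem M1_normal_form_eq_iff (hp : p.Prime) (hodd : Odd p) (hf : 0 < f) (hedf : e ≤ d + f)
    (i j k l : ℕ) :
    M1b p d e f ^ i * M1a p d e f ^ j = M1b p d e f ^ k * M1a p d e f ^ l ↔
      (p : ℤ) ^ d ∣ i - k ∧ (p : ℤ) ^ e ∣ j - l := by
  have hoa : orderOf (M1a p d e f) = p ^ e :=
    Nat.dvd_antisymm (orderOf_dvd_of_pow_eq_one M1a_pow)
      (prime_pow_dvd_of_M1a_pow_eq_one hp hodd hf hedf (pow_orderOf_eq_one _))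
  obtain ⟨φ, ha, hb⟩ := M1_exists_hom (p := p) (d := d) (e := e) (f := f)
    (x := (1 : Multiplicative (ZMod (p ^ d)))) (y := Multiplicative.ofAdd 1)
    (one_pow _) (by rw [← ofAdd_nsmul]; simp) (by simp)
  have hob : orderOf (M1b p d e f) = p ^ d := by
    refine Nat.dvd_antisymm (orderOf_dvd_of_pow_eq_one M1b_pow) ?_
    have := orderOf_map_dvd φ (M1b p d e f)
    rwa [hb, orderOf_ofAdd_eq_addOrderOf, ZMod.addOrderOf_one] at this
  have hmod (m n c : ℕ) : m ≡ n [MOD p ^ c] ↔ (p : ℤ) ^ c ∣ m - n := by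
    rw [Nat.ModEq.comm, Nat.modEq_iff_dvd]; push_cast; rfl
  rw [← hmod, ← hmod]
  nth_rw 1 [← hob]
  nth_rw 1 [← hoa]
  rw [← pow_eq_pow_iff_modEq, ← pow_eq_pow_iff_modEq]
  refine ⟨fun h => ?_, fun h => by rw [h.1, h.2]⟩
  have h1 : M1b p d e f ^ i = M1b p d e f ^ k := by
    have h2 := congrArg φ h
    simp only [map_mul, map_pow, ha, one_pow, mul_one] at h2
    rw [pow_eq_pow_iff_modEq, hob]
    rwa [pow_eq_pow_iff_modEq, hb, orderOf_ofAdd_eq_addOrderOf, ZMod.addOrderOf_one] at h2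
  exact ⟨h1, mul_left_cancel (h1 ▸ h)⟩

theorem M1_normal_form_eq_one_iff (hp : p.Prime) (hodd : Odd p) (hf : 0 < f) (hedf : e ≤ d + f)
    (i j : ℕ) :
    M1b p d e f ^ i * M1a p d e f ^ j = 1 ↔ (p : ℤ) ^ d ∣ i ∧ (p : ℤ) ^ e ∣ j := by
  simpa using M1_normal_form_eq_iff hp hodd hf hedf i j 0 0

theorem dvd_one_add_pow_pow_sub_one (hf : 0 < f) (r : ℕ) :
    (p : ℤ) ∣ (1 + (p : ℤ) ^ f) ^ r - 1 := by
  refine (dvd_pow_self (p : ℤ) hf.ne').trans ?_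
  simpa using sub_dvd_pow_sub_pow (1 + (p : ℤ) ^ f) 1 r

theorem M1_normal_form_pow_eq_one_iff (hp : p.Prime) (hodd : Odd p) (hf : 0 < f)
    (hedf : e ≤ d + f) (r s n : ℕ) :
    (M1b p d e f ^ r * M1a p d e f ^ s) ^ p ^ n = 1 ↔
      (p : ℤ) ^ d ∣ r * (p : ℤ) ^ n ∧ (p : ℤ) ^ e ∣ s * (p : ℤ) ^ n := by
  obtain ⟨c, hc, h⟩ := exists_geom_sum_prime_pow_eq hodd
    (dvd_one_add_pow_pow_sub_one (p := p) hf r) n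
  rw [normal_form_pow M1_mul, M1_normal_form_eq_one_iff hp hodd hf hedf]
  push_cast
  rw [h, ← mul_assoc, mul_comm _ c, (hc.pow_left (m := e)).dvd_mul_left_iff]

theorem M1_exists_normal_form (hp : p.Prime) (hodd : Odd p) (hf : 0 < f) (hde : d ≤ e)
    (hedf : e ≤ d + f) (g : M1 p d e f) : ∃ i j : ℕ, g = M1b p d e f ^ i * M1a p d e f ^ j := by
  have hg : g ∈ Subgroup.closure (Set.range (PresentedGroup.of (rels := M1rels p d e f))) := by
    rw [PresentedGroup.closure_range_of]; trivial
  induction hg using Subgroup.closure_induction with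
  | mem x hx =>
    obtain ⟨i, rfl⟩ := hx
    fin_cases i
    · exact ⟨0, 1, by simp [M1a]⟩
    · exact ⟨1, 0, by simp [M1b]⟩
  | one => exact ⟨0, 0, by simp⟩
  | mul x y _ _ hx hy =>
    obtain ⟨i, j, rfl⟩ := hx
    obtain ⟨k, l, rfl⟩ := hy
    exact ⟨_, _, normal_form_mul M1_mul i j k l⟩
  | inv x _ hx =>
    obtain ⟨i, j, rfl⟩ := hx
    have h := (M1_normal_form_pow_eq_one_iff hp hodd hf hedf i j e).mpr
      ⟨Dvd.dvd.mul_left (pow_dvd_pow _ hde) _, Dvd.intro_left _ rfl⟩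
    refine ⟨_, _, Eq.trans ?_ (normal_form_pow M1_mul i j (p ^ e - 1))⟩
    rw [inv_eq_iff_mul_eq_one, mul_pow_sub_one (pow_pos hp.pos e).ne', h]

theorem M1_finite (hp : p.Prime) (hodd : Odd p) (hf : 0 < f) (hde : d ≤ e)
    (hedf : e ≤ d + f) : Finite (M1 p d e f) := by
  refine Finite.of_surjective
    (fun x : Fin (p ^ d) × Fin (p ^ e) => M1b p d e f ^ (x.1 : ℕ) * M1a p d e f ^ (x.2 : ℕ)) ?_
  intro g
  obtain ⟨i, j, rfl⟩ := M1_exists_normal_form hp hodd hf hde hedf g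
  refine ⟨(⟨i % p ^ d, Nat.mod_lt _ (pow_pos hp.pos d)⟩,
    ⟨j % p ^ e, Nat.mod_lt _ (pow_pos hp.pos e)⟩), ?_⟩
  simp only [← pow_eq_pow_mod i M1b_pow, ← pow_eq_pow_mod j M1a_pow]

theorem pow_dvd_geom_sum_one_add_pow_sub (hp : p.Prime) (hodd : Odd p) (hd : 0 < d) (hf : 0 < f)
    (hedf : e ≤ d + f) {r : ℕ} (hr : (p : ℤ) ^ d ∣ r * (p : ℤ) ^ f) :
    (p : ℤ) ^ e ∣ ∑ i ∈ Finset.range (p ^ f), ((1 + (p : ℤ) ^ f) ^ r) ^ i - (p : ℤ) ^ f := by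
  refine (pow_dvd_pow _ (by omega : e ≤ f + d)).trans ?_
  refine pow_add_dvd_geom_sum_prime_pow_sub hodd f hd ?_
  rwa [pow_dvd_one_add_pow_sub_one_iff hp hodd hf, mul_comm]

theorem M1_mul_eq_iff (hp : p.Prime) (hodd : Odd p) (hd : 0 < d) (hf : 0 < f)
    (hedf : e ≤ d + f) {r s m u : ℕ} (hu : (p : ℤ) ^ e ∣ u * (p : ℤ) ^ d) :
    (M1b p d e f ^ r * M1a p d e f ^ s) * (M1b p d e f ^ (m + 1) * M1a p d e f ^ u) =
        (M1b p d e f ^ (m + 1) * M1a p d e f ^ u) *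
          (M1b p d e f ^ r * M1a p d e f ^ s) ^ (1 + p ^ f) ↔
      (p : ℤ) ^ d ∣ r * (p : ℤ) ^ f ∧ (p : ℤ) ^ e ∣ s * ((p : ℤ) ^ f * m) := by
  rw [normal_form_pow M1_mul, normal_form_mul M1_mul, normal_form_mul M1_mul,
    M1_normal_form_eq_iff hp hodd hf hedf]
  have h1 : ((r + (m + 1) : ℕ) : ℤ) - ((m + 1 + r * (1 + p ^ f) : ℕ) : ℤ) =
      -(r * (p : ℤ) ^ f) := by push_cast; ring
  rw [h1, dvd_neg]
  refine and_congr_right fun hr => ?_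
  have hS := pow_dvd_geom_sum_one_add_pow_sub hp hodd hd hf hedf hr
  have hQ : (p : ℤ) ^ e ∣ ((1 + (p : ℤ) ^ f) ^ r) ^ p ^ f - 1 := by
    rw [← pow_mul, pow_dvd_one_add_pow_sub_one_iff hp hodd hf]
    refine (pow_dvd_pow _ hedf).trans ?_
    rw [pow_add]
    push_cast
    rw [mul_comm ((p : ℤ) ^ f)]
    exact mul_dvd_mul_right hr _
  have hU : (p : ℤ) ^ e ∣ u * ((1 + (p : ℤ) ^ f) ^ (r * (1 + p ^ f)) - 1) := by
    refine hu.trans (mul_dvd_mul_left _ ?_)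
    rw [pow_dvd_one_add_pow_sub_one_iff hp hodd hf]
    refine hr.trans ⟨1 + (p : ℤ) ^ f, ?_⟩
    push_cast
    ring
  have hq : IsCoprime ((p : ℤ) ^ e) (1 + (p : ℤ) ^ f) := by
    refine IsCoprime.pow_left ⟨-(p : ℤ) ^ (f - 1), 1, ?_⟩
    obtain ⟨g, rfl⟩ : ∃ g, f = g + 1 := ⟨f - 1, by omega⟩
    rw [Nat.add_sub_cancel]
    ring
  rw [← pow_dvd_mul_one_add_pow_sub_one_iff hp hodd hf, ← hq.dvd_mul_left_iff (n := (s : ℤ) * _),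
    add_comm 1 (p ^ f), Finset.sum_range_succ]
  rw [add_comm 1 (p ^ f)] at hU
  push_cast
  rw [← dvd_add_left (((hS.mul_left s).add (hQ.mul_left s)).add hU)]
  refine iff_of_eq (congrArg _ ?_)
  ring_nf

theorem not_dvd_of_mulAut (hp : p.Prime) (hd : 0 < d) (he : 0 < e) (hf : 0 < f) {r s t u : ℕ}
    (φ : MulAut (M1 p d e f)) (ha : φ (M1a p d e f) = M1b p d e f ^ r * M1a p d e f ^ s)
    (hb : φ (M1b p d e f) = M1b p d e f ^ t * M1a p d e f ^ u) :
    ¬ (p : ℤ) ∣ r * u - s * t := by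
  intro hdet
  have : Fact p.Prime := ⟨hp⟩
  have hdet' : (r : ZMod p) * u - s * t = 0 := by
    have := (ZMod.intCast_zmod_eq_zero_iff_dvd _ p).mpr hdet
    exact_mod_cast this
  have hker : ∃ v : Fin 2 → ZMod p, v ≠ 0 ∧ !![(r : ZMod p), (s : ZMod p); t, u].mulVec v = 0 :=
    Matrix.exists_mulVec_eq_zero_iff.mpr (by rwa [Matrix.det_fin_two_of])
  obtain ⟨v, hv, hvr⟩ := hker
  have h0 : (r : ZMod p) * v 0 + s * v 1 = 0 := by
    simpa [Matrix.mulVec, dotProduct] using congrFun hvr 0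
  have h1 : (t : ZMod p) * v 0 + u * v 1 = 0 := by
    simpa [Matrix.mulVec, dotProduct] using congrFun hvr 1
  obtain ⟨ψ, hψa, hψb⟩ := M1_exists_hom (p := p) (d := d) (e := e) (f := f)
    (x := Multiplicative.ofAdd (v 1)) (y := Multiplicative.ofAdd (v 0))
    (by rw [← ofAdd_nsmul]; simp [he.ne'])
    (by rw [← ofAdd_nsmul]; simp [hd.ne'])
    (by rw [← ofAdd_nsmul, mul_comm]; simp [hf.ne', add_smul])
  have hcomp : ψ.comp φ.toMonoidHom = 1 := by
    refine M1_hom_ext ?_ ?_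
    · have : ψ (φ (M1a p d e f)) = 1 := by
        rw [ha, map_mul, map_pow, map_pow, hψa, hψb, ← ofAdd_nsmul, ← ofAdd_nsmul, ← ofAdd_add,
          nsmul_eq_mul, nsmul_eq_mul, h0, ofAdd_zero]
      exact this
    · have : ψ (φ (M1b p d e f)) = 1 := by
        rw [hb, map_mul, map_pow, map_pow, hψa, hψb, ← ofAdd_nsmul, ← ofAdd_nsmul, ← ofAdd_add,
          nsmul_eq_mul, nsmul_eq_mul, h1, ofAdd_zero]
      exact this
  have hψ (g : M1 p d e f) : ψ g = 1 := by
    simpa using DFunLike.congr_fun hcomp (φ.symm g)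
  refine hv (funext fun i => ?_)
  fin_cases i
  · exact ofAdd_eq_one.mp (hψb.symm.trans (hψ _))
  · exact ofAdd_eq_one.mp (hψa.symm.trans (hψ _))

theorem M1_eq_top_of_mem (hp : p.Prime) (hodd : Odd p) (hd : 0 < d) (hf : 0 < f)
    (hedf : e ≤ d + f) {r s t u : ℕ} (hr : (p : ℤ) ^ d ∣ r * (p : ℤ) ^ f)
    (hu : (p : ℤ) ^ e ∣ u * (p : ℤ) ^ d) (hdet : ¬ (p : ℤ) ∣ r * u - s * t)
    {H : Subgroup (M1 p d e f)} (hx : M1b p d e f ^ r * M1a p d e f ^ s ∈ H)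
    (hy : M1b p d e f ^ t * M1a p d e f ^ u ∈ H) : H = ⊤ := by
  have hpz : Prime (p : ℤ) := Nat.prime_iff_prime_int.mp hp
  have hcop {n : ℤ} (k : ℕ) (h : ¬ (p : ℤ) ∣ n) : IsCoprime ((p ^ k : ℕ) : ℤ) n := by
    push_cast
    exact IsCoprime.pow_left ((Prime.coprime_iff_not_dvd hpz).mpr h)
  have hapf : M1a p d e f ^ p ^ f ∈ H := by
    by_cases hs : (p : ℤ) ∣ s
    · have hru : ¬ (p : ℤ) ∣ r * u := fun h => hdet (dvd_sub h (hs.mul_right _))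
      have hdf : d ≤ f := by
        have := (hcop d fun h => hru (h.mul_right _)).dvd_of_dvd_mul_left (by push_cast; exact hr)
        exact (Nat.pow_dvd_pow_iff_le_right hp.one_lt).mp (by exact_mod_cast this)
      have hed : e ≤ d := by
        have := (hcop e fun h => hru (h.mul_left _)).dvd_of_dvd_mul_left (by push_cast; exact hu)
        exact (Nat.pow_dvd_pow_iff_le_right hp.one_lt).mp (by exact_mod_cast this)
      obtain ⟨c, hc⟩ := pow_dvd_pow p (hed.trans hdf)
      rw [hc, pow_mul, M1a_pow, one_pow]
      exact H.one_mem
    · refine H.mem_of_pow_mem_of_coprime (N := p ^ e) (m := s) ?_ ?_ (hcop e hs)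
      · rw [← pow_mul, mul_comm, pow_mul, M1a_pow, one_pow]
      · have h := H.pow_mem hx (p ^ f)
        have h2 : M1b p d e f ^ (r * p ^ f) *
            M1a p d e f ^ (s * ∑ i ∈ Finset.range (p ^ f), ((1 + p ^ f) ^ r) ^ i) =
            M1b p d e f ^ 0 * M1a p d e f ^ (p ^ f * s) := by
          rw [M1_normal_form_eq_iff hp hodd hf hedf]
          push_cast
          refine ⟨by simpa using hr, ?_⟩
          rw [mul_comm ((p : ℤ) ^ f), ← mul_sub]
          exact (pow_dvd_geom_sum_one_add_pow_sub hp hodd hd hf hedf hr).mul_left _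
        rw [normal_form_pow M1_mul, h2, pow_zero, one_mul, pow_mul] at h
        rwa [zpow_natCast]
  have hadjust {i j l : ℕ} (h : M1b p d e f ^ i * M1a p d e f ^ j ∈ H)
      (hjl : (p : ℤ) ^ f ∣ l - j) : M1b p d e f ^ i * M1a p d e f ^ l ∈ H := by
    obtain ⟨c, hc⟩ := hjl
    have : M1b p d e f ^ i * M1a p d e f ^ l =
        M1b p d e f ^ i * M1a p d e f ^ j * (M1a p d e f ^ p ^ f) ^ c := by
      rw [mul_assoc, ← zpow_natCast (M1a p d e f) l, ← zpow_natCast (M1a p d e f) j,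
        ← zpow_natCast (M1a p d e f) (p ^ f), ← zpow_mul, ← zpow_add]
      push_cast
      rw [← hc, add_sub_cancel]
    rw [this]
    exact H.mul_mem h (H.zpow_mem hapf c)
  have hpow {i j : ℕ} (h : M1b p d e f ^ i * M1a p d e f ^ j ∈ H) (n : ℕ) :
      M1b p d e f ^ (i * n) * M1a p d e f ^ (j * n) ∈ H := by
    have h2 := H.pow_mem h n
    rw [normal_form_pow M1_mul] at h2
    refine hadjust h2 ?_
    push_cast
    rw [← mul_sub, ← neg_sub, mul_neg, dvd_neg]
    refine Dvd.dvd.mul_left (dvd_trans ?_ (sub_one_dvd_geom_sum_sub _ n)) _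
    simpa using sub_dvd_pow_sub_pow (1 + (p : ℤ) ^ f) 1 i
  have hb : M1b p d e f ∈ H := by
    refine H.mem_of_pow_mem_of_coprime M1b_pow (m := r * u - s * t) ?_ (hcop d hdet)
    have h := H.mul_mem (hpow hx u) (H.inv_mem (hpow hy s))
    rw [mul_comm u s, mul_inv_rev, mul_assoc, mul_inv_cancel_left] at h
    rw [mul_comm (s : ℤ), zpow_sub]
    exact_mod_cast h
  have hc {i j : ℕ} (h : M1b p d e f ^ i * M1a p d e f ^ j ∈ H) : M1a p d e f ^ (j : ℤ) ∈ H := by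
    rw [zpow_natCast]
    exact (H.mul_mem_cancel_left (H.pow_mem hb i)).mp h
  refine M1_eq_top_of_generators_mem ?_ hb
  by_cases hs : (p : ℤ) ∣ s
  · exact H.mem_of_pow_mem_of_coprime M1a_pow (hc hy)
      (hcop e fun h => hdet (dvd_sub (h.mul_left _) (hs.mul_right _)))
  · exact H.mem_of_pow_mem_of_coprime M1a_pow (hc hx) (hcop e hs)

theorem M1_exists_mulAut_iff (hp : p.Prime) (hodd : Odd p) (hd : 0 < d) (hf : 0 < f)
    (hde : d ≤ e) (hedf : e ≤ d + f) (r s m u : ℕ) :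
    (∃ φ : MulAut (M1 p d e f),
        φ (M1a p d e f) = M1b p d e f ^ r * M1a p d e f ^ s ∧
        φ (M1b p d e f) = M1b p d e f ^ (m + 1) * M1a p d e f ^ u) ↔
      (p : ℤ) ^ d ∣ r * (p : ℤ) ^ f ∧ (p : ℤ) ^ e ∣ u * (p : ℤ) ^ d ∧
        (p : ℤ) ^ e ∣ s * ((p : ℤ) ^ f * m) ∧ ¬ (p : ℤ) ∣ r * u - s * (m + 1) := by
  constructor
  · rintro ⟨φ, ha, hb⟩
    have hu : (p : ℤ) ^ e ∣ u * (p : ℤ) ^ d := by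
      have h := congrArg φ (M1b_pow (p := p) (d := d) (e := e) (f := f))
      rw [map_pow, map_one, hb, M1_normal_form_pow_eq_one_iff hp hodd hf hedf] at h
      exact h.2
    have h := congrArg φ (M1_mul (p := p) (d := d) (e := e) (f := f))
    rw [map_mul, map_mul, map_pow, ha, hb, M1_mul_eq_iff hp hodd hd hf hedf hu] at h
    exact ⟨h.1, hu, h.2, by exact_mod_cast not_dvd_of_mulAut hp hd (hd.trans_le hde) hf φ ha hb⟩
  · rintro ⟨hr, hu, hm, hdet⟩
    obtain ⟨φ, ha, hb⟩ := M1_exists_hom (p := p) (d := d) (e := e) (f := f)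
      ((M1_normal_form_pow_eq_one_iff hp hodd hf hedf r s e).mpr
        ⟨Dvd.dvd.mul_left (pow_dvd_pow _ hde) _, dvd_mul_left _ _⟩)
      ((M1_normal_form_pow_eq_one_iff hp hodd hf hedf (m + 1) u d).mpr ⟨dvd_mul_left _ _, hu⟩)
      ((M1_mul_eq_iff hp hodd hd hf hedf hu).mpr ⟨hr, hm⟩)
    have hsurj : Function.Surjective φ :=
      MonoidHom.range_eq_top.mp <| M1_eq_top_of_mem hp hodd hd hf hedf hr hu
        (by exact_mod_cast hdet) ⟨_, ha⟩ ⟨_, hb⟩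
    have := M1_finite hp hodd hf hde hedf
    exact ⟨MulEquiv.ofBijective φ ⟨Finite.injective_iff_surjective.mpr hsurj, hsurj⟩, ha, hb⟩

theorem M1_exists_mulAut_iff_of_int (hp : p.Prime) (hodd : Odd p) (hd : 0 < d) (hf : 0 < f)
    (hde : d ≤ e) (hedf : e ≤ d + f) (r s t u : ℤ) :
    (∃ φ : MulAut (M1 p d e f),
        φ (M1a p d e f) = M1b p d e f ^ r * M1a p d e f ^ s ∧
        φ (M1b p d e f) = M1b p d e f ^ t * M1a p d e f ^ u) ↔
      (p : ℤ) ^ d ∣ r * (p : ℤ) ^ f ∧ (p : ℤ) ^ e ∣ u * (p : ℤ) ^ d ∧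
        (p : ℤ) ^ e ∣ s * ((p : ℤ) ^ f * (t - 1)) ∧ ¬ (p : ℤ) ∣ r * u - s * t := by
  have hrep (c : ℕ) (z : ℤ) : ∃ (n : ℕ) (k : ℤ), z = n + (p : ℤ) ^ c * k := by
    have hpos : (p : ℤ) ^ c ≠ 0 := pow_ne_zero _ (by exact_mod_cast hp.ne_zero)
    refine ⟨(z % (p : ℤ) ^ c).toNat, z / (p : ℤ) ^ c, ?_⟩
    rw [Int.toNat_of_nonneg (Int.emod_nonneg _ hpos), Int.emod_add_mul_ediv]
  have hzb (n : ℕ) (k : ℤ) : M1b p d e f ^ (n + (p : ℤ) ^ d * k) = M1b p d e f ^ n := by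
    rw [zpow_add, zpow_mul, ← Nat.cast_pow, zpow_natCast, zpow_natCast, M1b_pow, one_zpow, mul_one]
  have hza (n : ℕ) (k : ℤ) : M1a p d e f ^ (n + (p : ℤ) ^ e * k) = M1a p d e f ^ n := by
    rw [zpow_add, zpow_mul, ← Nat.cast_pow, zpow_natCast, zpow_natCast, M1a_pow, one_zpow, mul_one]
  obtain ⟨r, kr, rfl⟩ := hrep d r
  obtain ⟨s, ks, rfl⟩ := hrep e s
  obtain ⟨m, km, hm⟩ := hrep d (t - 1)
  obtain ⟨u, ku, rfl⟩ := hrep e u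
  obtain rfl : t = ((m + 1 : ℕ) : ℤ) + (p : ℤ) ^ d * km := by push_cast; linarith
  have hpd : (p : ℤ) ∣ (p : ℤ) ^ d := dvd_pow_self _ hd.ne'
  have hpe : (p : ℤ) ∣ (p : ℤ) ^ e := dvd_pow_self _ (hd.trans_le hde).ne'
  obtain ⟨g, hg⟩ := pow_dvd_pow (p : ℤ) hedf
  obtain ⟨d', hd'⟩ := hpd
  obtain ⟨e', he'⟩ := hpe
  rw [hzb, hza, hzb, hza, M1_exists_mulAut_iff hp hodd hd hf hde hedf]
  refine and_congr ?_ (and_congr ?_ (and_congr ?_ (not_congr ?_)))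
  · rw [add_mul, mul_assoc, dvd_add_left (dvd_mul_right _ _)]
  · rw [add_mul, mul_assoc, dvd_add_left (dvd_mul_right _ _)]
  · rw [← dvd_add_left (c := (p : ℤ) ^ e * (ks * (p : ℤ) ^ f * (m + (p : ℤ) ^ d * km) + s * g * km))
      (dvd_mul_right _ _)]
    refine iff_of_eq (congrArg _ ?_)
    rw [pow_add] at hg
    push_cast
    linear_combination (-(s : ℤ) * km) * hg
  · rw [← dvd_add_left (c := (p : ℤ) * (r * e' * ku + d' * kr * (u + (p : ℤ) ^ e * ku)
      - (s * d' * km + e' * ks * (m + 1 + (p : ℤ) ^ d * km)))) (dvd_mul_right _ _)]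
    refine iff_of_eq (congrArg _ ?_)
    push_cast
    linear_combination (-(r : ℤ) * ku + ks * (m + 1 + (p : ℤ) ^ d * km)) * he' +
      (s * km - kr * (u + (p : ℤ) ^ e * ku)) * hd'

end M1

/-- For `G = M₁(p,d,e,f)` (`d ≤ e`, `f ≤ e ≤ d + f`) with canonical
generators `a, b` and integers `r, s, t, u`, the assignment `a ↦ bʳaˢ, b ↦ bᵗaᵘ` extends to
an automorphism of `G` iff one of the five listed numerical conditions holds. -/
theorem stmt_11 (p d e f : ℕ) (hp : p.Prime) (hodd : Odd p)
    (hd : 0 < d) (hf : 0 < f) (hde : d ≤ e) (hfe : f ≤ e) (hedf : e ≤ d + f)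
    (r s t u : ℤ) :
    (∃ φ : MulAut (M1 p d e f),
        φ (M1a p d e f) = M1b p d e f ^ r * M1a p d e f ^ s ∧
        φ (M1b p d e f) = M1b p d e f ^ t * M1a p d e f ^ u) ↔
      ((f = e ∧ e = d ∧ ¬ (p : ℤ) ∣ (r * u - s * t)) ∨
       (f < e ∧ e = d ∧ (p : ℤ) ^ (e - f) ∣ r ∧ (p : ℤ) ^ (e - f) ∣ (t - 1) ∧ ¬ (p : ℤ) ∣ s) ∨
       (d < f ∧ f = e ∧ (p : ℤ) ^ (e - d) ∣ u ∧ ¬ (p : ℤ) ∣ s * t) ∨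
       (d ≤ f ∧ f < e ∧ (p : ℤ) ^ (e - d) ∣ u ∧ (p : ℤ) ^ (e - f) ∣ (t - 1) ∧ ¬ (p : ℤ) ∣ s) ∨
       (f < d ∧ d < e ∧ (p : ℤ) ^ (d - f) ∣ r ∧ (p : ℤ) ^ (e - d) ∣ u ∧
         (p : ℤ) ^ (e - f) ∣ (t - 1) ∧ ¬ (p : ℤ) ∣ s)) := by
  have hpz : Prime (p : ℤ) := Nat.prime_iff_prime_int.mp hp
  have hp0 : (p : ℤ) ≠ 0 := hpz.ne_zero
  have hcancel {m n : ℕ} (hmn : n ≤ m) (z : ℤ) :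
      (p : ℤ) ^ m ∣ z * (p : ℤ) ^ n ↔ (p : ℤ) ^ (m - n) ∣ z := by
    rw [← pow_sub_mul_pow (p : ℤ) hmn, mul_dvd_mul_iff_right (pow_ne_zero n hp0)]
  have hdvd {n : ℕ} {z : ℤ} (hn : 0 < n) (h : (p : ℤ) ^ n ∣ z) : (p : ℤ) ∣ z :=
    (dvd_pow_self _ hn.ne').trans h
  have ht1 (hdvd1 : (p : ℤ) ∣ t - 1) : ¬ (p : ℤ) ∣ t := fun h =>
    hpz.not_dvd_one (by simpa using dvd_sub h hdvd1)
  have hcomm : s * ((p : ℤ) ^ f * (t - 1)) = s * (t - 1) * (p : ℤ) ^ f := by ring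
  rw [M1_exists_mulAut_iff_of_int hp hodd hd hf hde hedf, hcancel hde, hcomm, hcancel hfe]
  have hrf : (p : ℤ) ^ d ∣ r * (p : ℤ) ^ f ↔ (p : ℤ) ^ (d - f) ∣ r := by
    rcases le_total f d with h | h
    · exact hcancel h r
    · simpa [Nat.sub_eq_zero_of_le h] using (pow_dvd_pow (p : ℤ) h).mul_left r
  rw [hrf]
  have hst (hs : ¬ (p : ℤ) ∣ s) :
      (p : ℤ) ^ (e - f) ∣ s * (t - 1) ↔ (p : ℤ) ^ (e - f) ∣ t - 1 :=
    (IsCoprime.pow_left ((Prime.coprime_iff_not_dvd hpz).mpr hs)).dvd_mul_left_iff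
  by_cases hall : f = e ∧ e = d
  · obtain ⟨rfl, rfl⟩ := hall
    simp
  have hru (hr : (p : ℤ) ^ (d - f) ∣ r) (hu : (p : ℤ) ^ (e - d) ∣ u) : (p : ℤ) ∣ r * u := by
    rcases lt_or_ge f d with h | h
    · exact (hdvd (by omega) hr).mul_right _
    · exact (hdvd (by omega) hu).mul_left _
  have hmain : ((p : ℤ) ^ (d - f) ∣ r ∧ (p : ℤ) ^ (e - d) ∣ u ∧ (p : ℤ) ^ (e - f) ∣ s * (t - 1) ∧
      ¬ (p : ℤ) ∣ r * u - s * t) ↔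
      ((p : ℤ) ^ (d - f) ∣ r ∧ (p : ℤ) ^ (e - d) ∣ u ∧ (p : ℤ) ^ (e - f) ∣ t - 1 ∧
        ¬ (p : ℤ) ∣ s * t) := by
    refine and_congr_right fun hr => and_congr_right fun hu => ?_
    rw [dvd_sub_right (hru hr hu)]
    exact and_congr_left fun h => hst fun hs => h (hs.mul_right t)
  rw [hmain]
  have hs_iff (h : f < e) (ht : (p : ℤ) ^ (e - f) ∣ t - 1) : (p : ℤ) ∣ s * t ↔ (p : ℤ) ∣ s := by
    rw [hpz.dvd_mul, or_iff_left (ht1 (hdvd (by omega) ht))]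
  rcases hfe.lt_or_eq with hfe' | rfl
  · have hfe_ne : ¬ f = e := hfe'.ne
    have key : ((p : ℤ) ^ (d - f) ∣ r ∧ (p : ℤ) ^ (e - d) ∣ u ∧ (p : ℤ) ^ (e - f) ∣ t - 1 ∧
        ¬ (p : ℤ) ∣ s * t) ↔ ((p : ℤ) ^ (d - f) ∣ r ∧ (p : ℤ) ^ (e - d) ∣ u ∧
          (p : ℤ) ^ (e - f) ∣ t - 1 ∧ ¬ (p : ℤ) ∣ s) :=
      and_congr_right fun _ => and_congr_right fun _ => and_congr_right fun ht =>
        not_congr (hs_iff hfe' ht)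
    rw [key]
    rcases hde.lt_or_eq with hde' | rfl
    · rcases le_or_gt d f with h | h
      · simp [hfe', hfe_ne, hde'.ne', h, h.not_gt, Nat.sub_eq_zero_of_le h]
      · simp [hfe', hfe_ne, hde', hde'.ne', h, h.not_ge]
    · simp [hfe', hfe_ne, hfe'.not_ge]
  · have hdf : d < f := lt_of_le_of_ne hde fun h => hall ⟨rfl, h.symm⟩
    simp [hdf, hdf.ne', hdf.not_gt, Nat.sub_eq_zero_of_le hdf.le]
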